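/- Let (X, p_X) be a DMS on a finite alphabet such that σ² := Var(−log p_X(X_1)) > 0. For each n, let C_n be a (2^{nR}, n, 2^{d_n}) uniform compression code with encoder φ_n and decoder ψ_n. If lim_{n→∞} P_e(φ_n, ψ_n) = 0 and lim_{n→∞} U_e(φ_n) = 0, then lim_{n→∞} d_n / √n = +∞; in particular the seed length must satisfy d_n = Ω(√n). -/

import Mathlib

open Finset Filter Real

attribute [local instance] Classical.propDecidable

noncomputable section

/-- `p` is a probability mass function on the finite type `α`. -/
def IsPMF {α : Type*} [Fintype α] (p : α → ℝ) : Prop :=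
  (∀ a, 0 ≤ p a) ∧ ∑ a, p a = 1

/-- i.i.d. (product) distribution of `n` copies of a source with pmf `p`. -/
def iid {α : Type*} [Fintype α] (p : α → ℝ) (n : ℕ) : (Fin n → α) → ℝ :=
  fun x => ∏ i, p (x i)

/-- variational distance between two pmfs -/
def VD {α : Type*} [Fintype α] (p q : α → ℝ) : ℝ := ∑ a, |p a - q a|

/-- Shannon entropy, base 2 -/
def Hsh {α : Type*} [Fintype α] (p : α → ℝ) : ℝ := - ∑ a, p a * Real.logb 2 (p a)

/-- Rényi entropy of order 2, base 2 -/
def H2 {α : Type*} [Fintype α] (p : α → ℝ) : ℝ := - Real.logb 2 (∑ a, (p a) ^ 2)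

/-- min-entropy, base 2 -/
def Hinf {α : Type*} [Fintype α] (p : α → ℝ) : ℝ := - Real.logb 2 (⨆ a, p a)

/-- Kullback–Leibler divergence, base 2 -/
def KL {α : Type*} [Fintype α] (p q : α → ℝ) : ℝ := ∑ a, p a * Real.logb 2 (p a / q a)

/-- pushforward of a pmf along a map -/
def push {α β : Type*} [Fintype α] [Fintype β] (p : α → ℝ) (f : α → β) : β → ℝ :=
  fun b => ∑ a, if f a = b then p a else 0

/-- conditional mutual information `I(X;Y|Q)` of a joint pmf on `Q × X × Y`, base 2:
`I(X;Y|Q) = H(Q,X) + H(Q,Y) - H(Q) - H(Q,X,Y)`. -/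
def condMI {Q X Y : Type*} [Fintype Q] [Fintype X] [Fintype Y] (p : Q × X × Y → ℝ) : ℝ :=
  Hsh (fun qx : Q × X => ∑ y, p (qx.1, qx.2, y))
    + Hsh (fun qy : Q × Y => ∑ x, p (qy.1, x, qy.2))
    - Hsh (fun q : Q => ∑ x, ∑ y, p (q, x, y))
    - Hsh p

/-- the set of `ε`-letter-typical sequences of length `n` -/
def typ {α : Type*} [Fintype α] (p : α → ℝ) (n : ℕ) (ε : ℝ) : Finset (Fin n → α) :=
  Finset.univ.filter fun x =>
    ∀ a, |((Finset.univ.filter fun i => x i = a).card : ℝ) / n - p a| ≤ ε * p a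

/-- cumulative distribution function of the standard normal distribution -/
def stdΦ (x : ℝ) : ℝ := ∫ t in Set.Iic x, Real.exp (-(t ^ 2) / 2) / Real.sqrt (2 * Real.pi)

/-- `⌈2^r⌉₊`, the size of a message set `{1,…,2^r}` -/
def e2 (r : ℝ) : ℕ := ⌈(2:ℝ) ^ r⌉₊


/-!
By the central limit theorem `-log p(X^n)` fluctuates on the scale `√n`: for every real `a`, the
words of probability at most `2 ^ (-(n H + a √n))` have total mass bounded away from `0`, and so
have the words of probability at least this threshold.

A message of probability at least `2 / |B|` contributes at least half of it to the distance from
uniformity. The seed splits the mass of a word among at most `|U|` messages, so the words heavier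
than `2 |U| / |B|` are rare. For each seed value at most `|B|` words are decoded correctly,
so the words much lighter than `1 / |B|` must be rare as well. Hence a window of width `K √n` in the
exponent has to fit into the factor `|U|`, for every `K`.
-/

open MeasureTheory ProbabilityTheory Topology

section Mass

variable {α β : Type*} [Fintype α] [Fintype β] {p : α → ℝ} {S T : Set α}

/-- The mass that the weights `p` give to the event `S`, that is, the probability of `S` when `p`
is a pmf. -/
def mass (p : α → ℝ) (S : Set α) : ℝ := ∑ a, S.indicator p a

lemma mass_mono_of_ne_zero (hp : ∀ a, 0 ≤ p a) (h : ∀ a ∈ S, p a ≠ 0 → a ∈ T) :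
    mass p S ≤ mass p T := by
  refine sum_le_sum fun a _ ↦ ?_
  by_cases hS : a ∈ S
  · rcases eq_or_ne (p a) 0 with h0 | h0
    · simp [Set.indicator_apply, h0]
    · simp [hS, h a hS h0]
  · simpa [hS] using Set.indicator_nonneg (fun b _ ↦ hp b) a

lemma mass_mono (hp : ∀ a, 0 ≤ p a) (h : S ⊆ T) : mass p S ≤ mass p T :=
  mass_mono_of_ne_zero hp fun _ ha _ ↦ h ha

lemma mass_eq_inter_add_diff (p : α → ℝ) (S T : Set α) :
    mass p S = mass p (S ∩ T) + mass p (S \ T) := by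
  simp only [mass, ← sum_add_distrib]
  refine sum_congr rfl fun a _ ↦ ?_
  by_cases hS : a ∈ S <;> by_cases hT : a ∈ T <;> simp [hS, hT]

lemma mass_le_ncard_mul {s : ℝ} (h : ∀ a ∈ S, p a ≤ s) : mass p S ≤ S.ncard * s := by
  classical
  calc mass p S = ∑ a ∈ S.toFinset, p a := by
        simp [mass, Set.indicator_apply, ← sum_filter, Set.filter_mem_univ_eq_toFinset]
    _ ≤ S.toFinset.card • s := sum_le_card_nsmul _ _ _ fun a ha ↦ h a (Set.mem_toFinset.1 ha)
    _ = S.ncard * s := by rw [nsmul_eq_mul, Set.ncard_eq_toFinset_card']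

lemma mass_push (p : α → ℝ) (f : α → β) (S : Set β) : mass (push p f) S = mass p (f ⁻¹' S) := by
  simp only [mass, push, Set.indicator_apply, Set.mem_preimage, ← sum_filter]
  rw [sum_comm' (t' := {a | f a ∈ S}) (s' := fun a ↦ {f a}) (by grind)]
  simp

lemma le_push_apply (hp : ∀ a, 0 ≤ p a) (f : α → β) (a : α) : p a ≤ push p f (f a) := by
  simpa [push] using single_le_sum (f := fun a' ↦ if f a' = f a then p a' else 0)
    (fun a' _ ↦ ite_nonneg (hp a') le_rfl) (mem_univ a)

lemma mul_mass_le_mul_VD {c : ℝ} (hc : 0 ≤ c) (p r : α → ℝ) :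
    (c - 1) * mass p {a | c * r a ≤ p a} ≤ c * VD p r := by
  simp only [mass, VD, mul_sum]
  refine sum_le_sum fun a _ ↦ ?_
  by_cases ha : c * r a ≤ p a
  · have := mul_le_mul_of_nonneg_left (le_abs_self (p a - r a)) hc
    simp only [Set.indicator_apply, Set.mem_ofPred_eq, if_pos ha]
    linarith
  · simp only [Set.indicator_apply, Set.mem_ofPred_eq, if_neg ha, mul_zero]
    positivity

end Mass

section OneShot

variable {A B U : Type*} [Fintype U] {p : A → ℝ} {s t : ℝ}

/-- The joint distribution of a source with distribution `p` and an independent seed, uniform on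
`U`. -/
def withSeed (U : Type*) [Fintype U] (p : A → ℝ) : A × U → ℝ :=
  fun xu ↦ p xu.1 * (1 / Fintype.card U)

lemma withSeed_nonneg (hp : ∀ a, 0 ≤ p a) (xu : A × U) : 0 ≤ withSeed U p xu :=
  mul_nonneg (hp _) (by positivity)

lemma ncard_decoded_le [Fintype B] (φ : A × U → B) (ψ : B × U → A) :
    {xu : A × U | ψ (φ xu, xu.2) = xu.1}.ncard ≤ Fintype.card B * Fintype.card U := by
  have hinj : Set.InjOn (fun xu : A × U ↦ (φ xu, xu.2)) {xu | ψ (φ xu, xu.2) = xu.1} := by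
    rintro ⟨x, u⟩ hx ⟨y, v⟩ hy hxy
    obtain ⟨hφ, rfl⟩ := Prod.mk.inj hxy
    simp only [Set.mem_ofPred_eq] at hx hy hφ
    rw [← hx, ← hy, hφ]
  calc _ ≤ (Set.univ : Set (B × U)).ncard :=
        Set.ncard_le_ncard_of_injOn _ (fun _ _ ↦ Set.mem_univ _) hinj
    _ = _ := by simp [Set.ncard_univ]

variable [Fintype A]

lemma mass_withSeed_fst [Nonempty U] (p : A → ℝ) (S : Set A) :
    mass (withSeed U p) (Prod.fst ⁻¹' S) = mass p S := by
  have hU : (Fintype.card U : ℝ) ≠ 0 := Nat.cast_ne_zero.2 Fintype.card_ne_zero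
  simp only [mass, Fintype.sum_prod_type]
  refine sum_congr rfl fun x _ ↦ ?_
  by_cases hx : x ∈ S <;> simp [withSeed, hx, hU, mul_left_comm]

/-- The error probability `P_e` of a seeded code: encoder and decoder share the seed. -/
def errorProb (p : A → ℝ) (φ : A × U → B) (ψ : B × U → A) : ℝ :=
  mass (withSeed U p) {xu | ψ (φ xu, xu.2) ≠ xu.1}

lemma errorProb_eq_sum (p : A → ℝ) (φ : A × U → B) (ψ : B × U → A) :
    errorProb p φ ψ = ∑ x, ∑ u,
      p x * (1 / Fintype.card U) * (if ψ (φ (x, u), u) = x then 0 else 1) := by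
  simp [errorProb, mass, withSeed, Set.indicator_apply, Fintype.sum_prod_type]

variable [Fintype B]

/-- The uniformity metric `U_e` of a seeded encoder: the variational distance between the
distribution of its output and the uniform distribution on the messages. -/
def uniformityMetric (p : A → ℝ) (φ : A × U → B) : ℝ :=
  VD (push (withSeed U p) φ) fun _ ↦ 1 / Fintype.card B

lemma uniformityMetric_eq_VD (p : A → ℝ) (φ : A × U → B) :
    uniformityMetric p φ = VD (fun m ↦ ∑ x, ∑ u,
      p x * (1 / Fintype.card U) * (if φ (x, u) = m then 1 else 0))
        (fun _ ↦ 1 / Fintype.card B) := by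
  refine congrArg (VD · _) (funext fun m ↦ ?_)
  simp [push, withSeed, Fintype.sum_prod_type]

lemma mass_light_le [Nonempty U] (hp : ∀ a, 0 ≤ p a) (hs : 0 ≤ s) (φ : A × U → B)
    (ψ : B × U → A) : mass p {x | p x ≤ s} ≤ errorProb p φ ψ + Fintype.card B * s := by
  have hU : (0 : ℝ) < Fintype.card U := Nat.cast_pos.2 Fintype.card_pos
  set E : Set (A × U) := {xu | ψ (φ xu, xu.2) ≠ xu.1}
  set L : Set (A × U) := Prod.fst ⁻¹' {x | p x ≤ s}
  have hdecoded : ((L \ E).ncard : ℝ) ≤ Fintype.card B * Fintype.card U := by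
    refine mod_cast (Set.ncard_le_ncard ?_).trans (ncard_decoded_le φ ψ)
    exact fun xu hxu ↦ not_not.1 hxu.2
  calc mass p {x | p x ≤ s}
      = mass (withSeed U p) (L ∩ E) + mass (withSeed U p) (L \ E) := by
        rw [← mass_withSeed_fst (U := U), ← mass_eq_inter_add_diff]
    _ ≤ errorProb p φ ψ + (L \ E).ncard * (s * (1 / Fintype.card U)) :=
        add_le_add (mass_mono (withSeed_nonneg hp) Set.inter_subset_right)
          (mass_le_ncard_mul fun xu hxu ↦ mul_le_mul_of_nonneg_right hxu.1 (by positivity))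
    _ ≤ errorProb p φ ψ + Fintype.card B * Fintype.card U * (s * (1 / Fintype.card U)) := by
        gcongr
    _ = errorProb p φ ψ + Fintype.card B * s := by field_simp [hU.ne']

lemma mul_mass_heavy_le [Nonempty U] (hp : ∀ a, 0 ≤ p a) {c : ℝ} (hc : 1 ≤ c) (φ : A × U → B)
    (ht : c * Fintype.card U ≤ t * Fintype.card B) :
    (c - 1) * mass p {x | t ≤ p x} ≤ c * uniformityMetric p φ := by
  have hU : (0 : ℝ) < Fintype.card U := Nat.cast_pos.2 Fintype.card_pos
  set q := push (withSeed U p) φ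
  have hsub : Prod.fst ⁻¹' {x | t ≤ p x} ⊆ φ ⁻¹' {m | c * (1 / Fintype.card B) ≤ q m} := by
    intro xu hxu
    have hB : (0 : ℝ) < Fintype.card B := Nat.cast_pos.2 (Fintype.card_pos_iff.2 ⟨φ xu⟩)
    calc c * (1 / Fintype.card B) ≤ t * (1 / Fintype.card U) := by
          rwa [mul_one_div, mul_one_div, div_le_div_iff₀ hB hU]
      _ ≤ withSeed U p xu := mul_le_mul_of_nonneg_right hxu (by positivity)
      _ ≤ q (φ xu) := le_push_apply (withSeed_nonneg hp) φ xu
  calc (c - 1) * mass p {x | t ≤ p x}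
      ≤ (c - 1) * mass q {m | c * (1 / Fintype.card B) ≤ q m} := by
        rw [mass_push, ← mass_withSeed_fst (U := U)]
        exact mul_le_mul_of_nonneg_left (mass_mono (withSeed_nonneg hp) hsub) (sub_nonneg.2 hc)
    _ ≤ c * uniformityMetric p φ := mul_mass_le_mul_VD (zero_le_one.trans hc) q _

theorem mul_mass_light_sub_errorProb_le [Nonempty U] (hp : ∀ a, 0 ≤ p a) (hs : 0 ≤ s) (ht : 0 ≤ t)
    (φ : A × U → B) (ψ : B × U → A) (hφ : 2 * uniformityMetric p φ < mass p {x | t ≤ p x}) :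
    t * (mass p {x | p x ≤ s} - errorProb p φ ψ) ≤ 2 * s * Fintype.card U := by
  have hheavy : t * Fintype.card B < 2 * Fintype.card U := by
    by_contra! h
    linarith [mul_mass_heavy_le hp one_le_two φ h]
  calc t * (mass p {x | p x ≤ s} - errorProb p φ ψ)
      ≤ t * (Fintype.card B * s) :=
        mul_le_mul_of_nonneg_left (sub_le_iff_le_add'.2 (mass_light_le hp hs φ ψ)) ht
    _ = t * Fintype.card B * s := by ring
    _ ≤ 2 * Fintype.card U * s := by gcongr
    _ = 2 * s * Fintype.card U := by ring

theorem logb_sub_add_le_logb_card_seed [Nonempty U] (hp : ∀ a, 0 ≤ p a) (hs : 0 < s) (ht : 0 < t)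
    (φ : A × U → B) (ψ : B × U → A) (hφ : 2 * uniformityMetric p φ < mass p {x | t ≤ p x}) {δ : ℝ}
    (hδ : 0 < δ) (hψ : errorProb p φ ψ + δ ≤ mass p {x | p x ≤ s}) :
    logb 2 t - logb 2 s + logb 2 (δ / 2) ≤ logb 2 (Fintype.card U) := by
  rw [← logb_div ht.ne' hs.ne', ← logb_mul (by positivity) (by positivity)]
  refine logb_le_logb_of_le one_lt_two (by positivity) ?_
  calc t / s * (δ / 2) = t * δ / (2 * s) := by field_simp
    _ ≤ t * (mass p {x | p x ≤ s} - errorProb p φ ψ) / (2 * s) := by gcongr; linarith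
    _ ≤ Fintype.card U := by
      rw [div_le_iff₀' (by positivity)]
      exact mul_mass_light_sub_errorProb_le hp hs.le ht.le φ ψ hφ

end OneShot

theorem exists_pos_eventually_le_measureReal_clt_mem {Ω : Type*} [MeasurableSpace Ω]
    {P : Measure Ω} [IsProbabilityMeasure P] {Y : ℕ → Ω → ℝ} (hY : MemLp (Y 0) 2 P)
    (hvar : 0 < Var[Y 0; P]) (hindep : iIndepFun Y P)
    (hident : ∀ i, IdentDistrib (Y i) (Y 0) P P) {G : Set ℝ} (hG : IsOpen G)
    (hne : G.Nonempty) :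
    ∃ δ > 0, ∀ᶠ n : ℕ in atTop,
      δ ≤ P.real {ω | (√n)⁻¹ * (∑ k ∈ range n, Y k ω - n * P[Y 0]) ∈ G} := by
  set γ := gaussianReal 0 Var[Y 0; P].toNNReal
  have hclt := tendstoInDistribution_inv_sqrt_mul_sum_sub (P' := γ) (Y := id) HasLaw.id hY
    hindep hident
  have hliminf := ProbabilityMeasure.le_liminf_measure_open_of_tendsto hclt.tendsto hG
  simp only [ProbabilityMeasure.coe_mk, Measure.map_id] at hliminf
  have hγG : 0 < γ G := pos_iff_ne_zero.2 fun h0 ↦ (hG.measure_pos volume hne).ne'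
    (gaussianReal_absolutelyContinuous' 0 (by simpa using hvar) h0)
  obtain ⟨c, hc0, hc⟩ := exists_between hγG
  refine ⟨c.toReal, ENNReal.toReal_pos hc0.ne' hc.ne_top, ?_⟩
  filter_upwards [eventually_lt_of_lt_liminf (hc.trans_le hliminf)] with n hn
  rw [Measure.map_apply_of_aemeasurable (hclt.forall_aemeasurable n) hG.measurableSet] at hn
  exact ENNReal.toReal_mono (measure_ne_top P _) hn.le

lemma infinitePi_map_precomp_eq_pi {ι κ : Type*} [Fintype ι] {X : κ → Type*}
    [∀ k, MeasurableSpace (X k)] (μ : ∀ k, Measure (X k)) [∀ k, IsProbabilityMeasure (μ k)]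
    {e : ι → κ} (he : e.Injective) :
    (Measure.infinitePi μ).map (fun ω i ↦ ω (e i)) = Measure.pi fun i ↦ μ (e i) := by
  have hindep := (iIndepFun_infinitePi (P := μ) (X := fun _ x ↦ x)
    fun _ ↦ measurable_id).precomp he
  rw [iIndepFun_iff_map_fun_eq_pi_map fun i ↦ (measurable_pi_apply (e i)).aemeasurable] at hindep
  simpa [Measure.infinitePi_map_eval] using hindep

theorem exists_pos_eventually_le_pi_real_clt_mem {X : Type*} [MeasurableSpace X] (μ : Measure X)
    [IsProbabilityMeasure μ] {f : X → ℝ} (hf : Measurable f) (hL2 : MemLp f 2 μ)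
    (hvar : 0 < Var[f; μ]) {G : Set ℝ} (hG : IsOpen G) (hne : G.Nonempty) :
    ∃ δ > 0, ∀ᶠ n : ℕ in atTop, δ ≤ (Measure.pi fun _ : Fin n ↦ μ).real
      {x | (√n)⁻¹ * (∑ i, f (x i) - n * μ[f]) ∈ G} := by
  set Q : Measure (ℕ → X) := Measure.infinitePi fun _ ↦ μ
  have hcoord (k : ℕ) : MeasurePreserving (fun ω : ℕ → X ↦ ω k) Q μ :=
    measurePreserving_eval_infinitePi _ k
  have hlaw (k : ℕ) : IdentDistrib (fun ω ↦ f (ω k)) f Q μ := by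
    refine ⟨(hf.comp (hcoord k).measurable).aemeasurable, hf.aemeasurable, ?_⟩
    rw [← (hcoord k).map_eq, Measure.map_map hf (hcoord k).measurable]
    rfl
  obtain ⟨δ, hδ, hn⟩ := exists_pos_eventually_le_measureReal_clt_mem (P := Q)
    (Y := fun k ω ↦ f (ω k)) ((hlaw 0).memLp_iff.2 hL2) (by rwa [(hlaw 0).variance_eq])
    (iIndepFun_infinitePi fun _ ↦ hf) (fun k ↦ (hlaw k).trans (hlaw 0).symm) hG hne
  refine ⟨δ, hδ, hn.mono fun n hn ↦ ?_⟩
  have hmeas : MeasurableSet {x : Fin n → X | (√n)⁻¹ * (∑ i, f (x i) - n * μ[f]) ∈ G} :=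
    measurableSet_preimage (by fun_prop) hG.measurableSet
  rw [← infinitePi_map_precomp_eq_pi (fun _ ↦ μ) Fin.val_injective,
    map_measureReal_apply (by fun_prop) hmeas]
  simp only [(hlaw 0).integral_eq, sum_range] at hn
  exact hn

section InformationSpectrum

variable {X : Type*} [Fintype X] {p : X → ℝ}

lemma iid_nonneg (hp : ∀ a, 0 ≤ p a) (n : ℕ) (x : Fin n → X) : 0 ≤ iid p n x :=
  prod_nonneg fun _ _ ↦ hp _

namespace IsPMF

/-- A pmf in the sense of `IsPMF`, as an element of `PMF`. -/
def toPMF (hp : IsPMF p) : PMF X :=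
  PMF.ofFintype (fun x ↦ ENNReal.ofReal (p x)) <| by
    rw [← ENNReal.ofReal_sum_of_nonneg fun a _ ↦ hp.1 a, hp.2, ENNReal.ofReal_one]

lemma toReal_toPMF_apply (hp : IsPMF p) (x : X) : (hp.toPMF x).toReal = p x :=
  ENNReal.toReal_ofReal (hp.1 x)

variable [MeasurableSpace X] [MeasurableSingletonClass X]

lemma integral_toMeasure (hp : IsPMF p) (f : X → ℝ) :
    ∫ x, f x ∂hp.toPMF.toMeasure = ∑ x, p x * f x := by
  simp [PMF.integral_eq_sum, toReal_toPMF_apply]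

lemma pi_toMeasure_real (hp : IsPMF p) (n : ℕ) (S : Set (Fin n → X)) :
    (Measure.pi fun _ : Fin n ↦ hp.toPMF.toMeasure).real S = mass (iid p n) S := by
  have hsingleton (x : Fin n → X) :
      (Measure.pi fun _ : Fin n ↦ hp.toPMF.toMeasure).real {x} = iid p n x := by
    simp [measureReal_def, Measure.pi_singleton, ENNReal.toReal_prod, iid, toReal_toPMF_apply]
  rw [← Set.coe_toFinset S, ← sum_measureReal_singleton]
  simp [hsingleton, mass, Set.indicator_apply, ← sum_filter, Set.filter_mem_univ_eq_toFinset]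

end IsPMF

theorem exists_pos_eventually_le_mass_iid_clt_mem (hp : IsPMF p) (f : X → ℝ)
    (hvar : 0 < ∑ x, p x * (f x - ∑ y, p y * f y) ^ 2) {G : Set ℝ} (hG : IsOpen G)
    (hne : G.Nonempty) :
    ∃ δ > 0, ∀ᶠ n : ℕ in atTop,
      δ ≤ mass (iid p n) {x | (√n)⁻¹ * (∑ i, f (x i) - n * ∑ y, p y * f y) ∈ G} := by
  let _ : MeasurableSpace X := ⊤
  have hmeas : Measurable f := measurable_of_finite f
  have hVar : Var[f; hp.toPMF.toMeasure] = ∑ x, p x * (f x - ∑ y, p y * f y) ^ 2 := by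
    rw [variance_eq_integral hmeas.aemeasurable, hp.integral_toMeasure, hp.integral_toMeasure]
  simpa only [hp.pi_toMeasure_real, hp.integral_toMeasure] using
    exists_pos_eventually_le_pi_real_clt_mem hp.toPMF.toMeasure hmeas MemLp.of_discrete
      (hVar ▸ hvar) hG hne

/-- The self-information of the symbol `x`, in bits; it takes the junk value `0` where `p x = 0`. -/
def selfInfo (p : X → ℝ) (x : X) : ℝ := -logb 2 (p x)

lemma sum_mul_selfInfo (p : X → ℝ) : ∑ x, p x * selfInfo p x = Hsh p := by
  simp [selfInfo, Hsh]

lemma iid_eq_two_rpow_neg_sum_selfInfo (hp : ∀ a, 0 ≤ p a) {n : ℕ} {x : Fin n → X}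
    (hx : iid p n x ≠ 0) : iid p n x = 2 ^ (-∑ i, selfInfo p (x i)) := by
  have hlog : -∑ i, selfInfo p (x i) = logb 2 (iid p n x) := by
    simp [selfInfo, iid, logb_prod _ _ (prod_ne_zero_iff.1 hx)]
  rw [hlog, rpow_logb two_pos (by norm_num) ((iid_nonneg hp n x).lt_of_ne' hx)]

theorem exists_pos_eventually_le_mass_selfInfo_mem (hp : IsPMF p)
    (hσ : 0 < ∑ x, p x * (logb 2 (p x) + Hsh p) ^ 2) {G : Set ℝ} (hG : IsOpen G)
    (hne : G.Nonempty) :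
    ∃ δ > 0, ∀ᶠ n : ℕ in atTop,
      δ ≤ mass (iid p n) {x | (√n)⁻¹ * (∑ i, selfInfo p (x i) - n * Hsh p) ∈ G} := by
  simp only [← sum_mul_selfInfo]
  refine exists_pos_eventually_le_mass_iid_clt_mem hp (selfInfo p) (hσ.trans_eq ?_) hG hne
  refine sum_congr rfl fun x _ ↦ ?_
  rw [sum_mul_selfInfo, selfInfo]
  ring

theorem exists_pos_eventually_le_mass_iid_le (hp : IsPMF p)
    (hσ : 0 < ∑ x, p x * (logb 2 (p x) + Hsh p) ^ 2) (a : ℝ) :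
    ∃ δ > 0, ∀ᶠ n : ℕ in atTop,
      δ ≤ mass (iid p n) {x | iid p n x ≤ 2 ^ (-(n * Hsh p + a * √n))} := by
  obtain ⟨δ, hδ, h⟩ := exists_pos_eventually_le_mass_selfInfo_mem hp hσ (isOpen_Ioi (a := a))
    Set.nonempty_Ioi
  refine ⟨δ, hδ, ?_⟩
  filter_upwards [h, eventually_gt_atTop 0] with n hδn hn
  refine hδn.trans (mass_mono_of_ne_zero (iid_nonneg hp.1 n) fun x hx h0 ↦ ?_)
  rw [Set.mem_ofPred_eq, Set.mem_Ioi, lt_inv_mul_iff₀ (by positivity)] at hx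
  rw [Set.mem_ofPred_eq, iid_eq_two_rpow_neg_sum_selfInfo hp.1 h0]
  exact rpow_le_rpow_of_exponent_le one_le_two (by linarith)

theorem exists_pos_eventually_le_mass_le_iid (hp : IsPMF p)
    (hσ : 0 < ∑ x, p x * (logb 2 (p x) + Hsh p) ^ 2) (a : ℝ) :
    ∃ δ > 0, ∀ᶠ n : ℕ in atTop,
      δ ≤ mass (iid p n) {x | 2 ^ (-(n * Hsh p + a * √n)) ≤ iid p n x} := by
  obtain ⟨δ, hδ, h⟩ := exists_pos_eventually_le_mass_selfInfo_mem hp hσ (isOpen_Iio (a := a))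
    Set.nonempty_Iio
  refine ⟨δ, hδ, ?_⟩
  filter_upwards [h, eventually_gt_atTop 0] with n hδn hn
  refine hδn.trans (mass_mono_of_ne_zero (iid_nonneg hp.1 n) fun x hx h0 ↦ ?_)
  rw [Set.mem_ofPred_eq, Set.mem_Iio, inv_mul_lt_iff₀ (by positivity)] at hx
  rw [Set.mem_ofPred_eq, iid_eq_two_rpow_neg_sum_selfInfo hp.1 h0]
  exact rpow_le_rpow_of_exponent_le one_le_two (by linarith)

end InformationSpectrum

theorem statement8_general {X : Type*} [Fintype X] (pX : X → ℝ) (hX : IsPMF pX)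
    (hσ : 0 < ∑ x, pX x * (logb 2 (pX x) + Hsh pX) ^ 2)
    {B U : ℕ → Type*} [∀ n, Fintype (B n)] [∀ n, Fintype (U n)] [∀ n, Nonempty (U n)]
    (φ : (n : ℕ) → (Fin n → X) × U n → B n) (ψ : (n : ℕ) → B n × U n → (Fin n → X))
    (hPe : Tendsto (fun n ↦ errorProb (iid pX n) (φ n) (ψ n)) atTop (𝓝 0))
    (hUe : Tendsto (fun n ↦ uniformityMetric (iid pX n) (φ n)) atTop (𝓝 0)) :
    Tendsto (fun n : ℕ ↦ logb 2 (Fintype.card (U n)) / √n) atTop atTop := by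
  refine tendsto_atTop.2 fun a ↦ ?_
  obtain ⟨δ₁, hδ₁, hlight⟩ := exists_pos_eventually_le_mass_iid_le hX hσ a
  obtain ⟨δ₂, hδ₂, hheavy⟩ := exists_pos_eventually_le_mass_le_iid hX hσ (-1)
  have hsqrt : Tendsto (fun n : ℕ ↦ √n) atTop atTop :=
    tendsto_sqrt_atTop.comp tendsto_natCast_atTop_atTop
  filter_upwards [hlight, hheavy, hPe.eventually_le_const (half_pos hδ₁),
    hUe.eventually_lt_const (half_pos hδ₂),
    hsqrt.eventually_ge_atTop (-logb 2 (δ₁ / 2 / 2)), eventually_gt_atTop 0]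
    with n hlight hheavy hPe hUe hsqrt hn
  have hseed := logb_sub_add_le_logb_card_seed (iid_nonneg hX.1 n)
    (s := 2 ^ (-(n * Hsh pX + a * √n))) (t := 2 ^ (-(n * Hsh pX + -1 * √n)))
    (by positivity) (by positivity) (φ n) (ψ n) (by linarith) (half_pos hδ₁) (by linarith)
  rw [logb_rpow two_pos (by norm_num), logb_rpow two_pos (by norm_num)] at hseed
  rw [le_div_iff₀ (by positivity)]
  linarith

/-- seed converse: for uniform compression codes with vanishing error
and uniformity metrics, the seed length satisfies `d_n/√n → ∞`, i.e. `d_n = Ω(√n)`. -/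
theorem statement8 {X : Type*} [Fintype X] (pX : X → ℝ) (hX : IsPMF pX)
    -- `σ² = Var(−log p_X(X₁)) > 0`
    (hσ : 0 < ∑ x, pX x * (Real.logb 2 (pX x) + Hsh pX) ^ 2)
    (R : ℝ) (d : ℕ → ℕ)
    (φ : (n : ℕ) → (Fin n → X) × Fin (2 ^ d n) → Fin (e2 (R * n)))
    (ψ : (n : ℕ) → Fin (e2 (R * n)) × Fin (2 ^ d n) → (Fin n → X))
    -- `P_e(φ_n, ψ_n) → 0`
    (hPe : Tendsto (fun (n : ℕ) =>
        ∑ x : Fin n → X, ∑ u : Fin (2 ^ d n),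
          iid pX n x * (1 / (2:ℝ) ^ d n) * (if ψ n (φ n (x, u), u) = x then 0 else 1))
      atTop (nhds 0))
    -- `U_e(φ_n) → 0`
    (hUe : Tendsto (fun (n : ℕ) =>
        VD (fun m : Fin (e2 (R * n)) =>
              ∑ x : Fin n → X, ∑ u : Fin (2 ^ d n),
                iid pX n x * (1 / (2:ℝ) ^ d n) * (if φ n (x, u) = m then 1 else 0))
           (fun _ => 1 / (e2 (R * n) : ℝ)))
      atTop (nhds 0)) :
    Tendsto (fun (n : ℕ) => (d n : ℝ) / Real.sqrt n) atTop atTop := by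
  simpa [logb_pow] using statement8_general pX hX hσ φ ψ (by simpa [errorProb_eq_sum] using hPe)
    (by simpa [uniformityMetric_eq_VD] using hUe)
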